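/- Let k ≥ 2, r ≥ 1, let G = (N^k, Θ) be a downward directed graph, and let F : N^k × (N^k × N)^r → N be a partial selection function. The family S = {ŝ_D : D ⊆ N^k, D finite} is full, reflexive, and jump free. -/

import Mathlib

open scoped Classical

/-- The maximum coordinate of a `k`-tuple of nonnegative integers. -/
def maxv {k : ℕ} (z : Fin k → ℕ) : ℕ := Finset.univ.sup z

/-- The minimum coordinate of a `k`-tuple of nonnegative integers. -/
noncomputable def minv {k : ℕ} (z : Fin k → ℕ) : ℕ := sInf (Set.range z)

/-- A directed graph `(N^k, Θ)` is downward directed if every edge `(x, y)`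
satisfies `max(x) > max(y)`. -/
def Downward {k : ℕ} (Θ : Set ((Fin k → ℕ) × (Fin k → ℕ))) : Prop :=
  ∀ e ∈ Θ, maxv e.2 < maxv e.1

/-- Two `k`-tuples are order equivalent if they have the same order type:
corresponding coordinates compare the same way. -/
def OrdEquiv {k : ℕ} (x y : Fin k → ℕ) : Prop :=
  ∀ i j : Fin k, (x i < x j ↔ y i < y j) ∧ (x i = x j ↔ y i = y j)

/-- A function with a finite domain `dom ⊆ N^k` (values outside `dom` are irrelevant). -/
structure FinFn (k : ℕ) where
  dom : Finset (Fin k → ℕ)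
  toFun : (Fin k → ℕ) → ℕ

/-- `field(D)`: the set of all coordinates of elements of `D`. -/
def fieldSet {k : ℕ} (D : Finset (Fin k → ℕ)) : Set ℕ :=
  {n | ∃ z ∈ D, ∃ i : Fin k, z i = n}

/-- A family is full if every finite `D ⊆ N^k` is the domain of some member. -/
def FullFam {k : ℕ} (S : Set (FinFn k)) : Prop :=
  ∀ D : Finset (Fin k → ℕ), ∃ f ∈ S, f.dom = D

/-- A family is reflexive if each member takes values in the field of its domain. -/
def ReflexiveFam {k : ℕ} (S : Set (FinFn k)) : Prop :=
  ∀ f ∈ S, ∀ x ∈ f.dom, f.toFun x ∈ fieldSet f.dom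

/-- The jump free condition: if `x ∈ A ∩ B`, `A_x ⊆ B_x`
(`D_x = {z ∈ D : max(z) < max(x)}`), and `f_A = f_B` on `A_x`,
then `f_A(x) ≥ f_B(x)`. -/
def JumpFreeFam {k : ℕ} (S : Set (FinFn k)) : Prop :=
  ∀ fA ∈ S, ∀ fB ∈ S, ∀ x : Fin k → ℕ, x ∈ fA.dom → x ∈ fB.dom →
    (∀ z ∈ fA.dom, maxv z < maxv x → z ∈ fB.dom) →
    (∀ y ∈ fA.dom, maxv y < maxv x → fA.toFun y = fB.toFun y) →
    fB.toFun x ≤ fA.toFun x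

/-- A family is decreasing if whenever `domain(f) ⊆ domain(g)` one has
`f(x) ≥ g(x)` for all `x ∈ domain(f)`. -/
def DecreasingFam {k : ℕ} (S : Set (FinFn k)) : Prop :=
  ∀ f ∈ S, ∀ g ∈ S, f.dom ⊆ g.dom → ∀ x ∈ f.dom, g.toFun x ≤ f.toFun x

/-- One step of the recursion defining `Φ^D_z`: given the pair
`prev y = (value at y, Φ^D_y ≠ ∅)` for vertices `y` below `z`, this is the set of
defined values `F[z, (y_1,n_1), …, (y_r,n_r)]` with each `y_i ∈ G_D^z` and
`n_i = prev(y_i).1` if `Φ^D_{y_i} ≠ ∅`, `n_i = min(y_i)` if `Φ^D_{y_i} = ∅`. -/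
def PhiStep {k r : ℕ} (Θ : Set ((Fin k → ℕ) × (Fin k → ℕ))) (D : Set (Fin k → ℕ))
    (F : (Fin k → ℕ) → (Fin r → (Fin k → ℕ) × ℕ) → Option ℕ)
    (prev : (Fin k → ℕ) → ℕ × Prop) (z : Fin k → ℕ) : Set ℕ :=
  {n | ∃ w : Fin r → (Fin k → ℕ) × ℕ,
    (∀ i : Fin r, (z ∈ D ∧ (w i).1 ∈ D ∧ (z, (w i).1) ∈ Θ) ∧
      (w i).2 = if (prev ((w i).1)).2 then (prev ((w i).1)).1 else minv ((w i).1)) ∧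
    F z w = some n}

/-- Fuel-based recursion computing `(ŝ_D(z), Φ^D_z ≠ ∅)`; since `G` is downward
directed, fuel `max(z)` suffices, see `sD` and `PhiNEs`. -/
noncomputable def sAuxN {k r : ℕ} (Θ : Set ((Fin k → ℕ) × (Fin k → ℕ)))
    (D : Set (Fin k → ℕ)) (F : (Fin k → ℕ) → (Fin r → (Fin k → ℕ) × ℕ) → Option ℕ) :
    ℕ → (Fin k → ℕ) → ℕ × Prop
  | 0, z =>
      (if (PhiStep Θ D F (fun y => (maxv y, False)) z).Nonempty then
        sInf (PhiStep Θ D F (fun y => (maxv y, False)) z)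
      else maxv z,
      (PhiStep Θ D F (fun y => (maxv y, False)) z).Nonempty)
  | (m + 1), z =>
      (if (PhiStep Θ D F (sAuxN Θ D F m) z).Nonempty then
        sInf (PhiStep Θ D F (sAuxN Θ D F m) z)
      else maxv z,
      (PhiStep Θ D F (sAuxN Θ D F m) z).Nonempty)

/-- `ŝ_D(z)`: `max(z)` if `Φ^D_z = ∅`, else `min(Φ^D_z)`. -/
noncomputable def sD {k r : ℕ} (Θ : Set ((Fin k → ℕ) × (Fin k → ℕ)))
    (D : Set (Fin k → ℕ)) (F : (Fin k → ℕ) → (Fin r → (Fin k → ℕ) × ℕ) → Option ℕ)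
    (z : Fin k → ℕ) : ℕ :=
  (sAuxN Θ D F (maxv z) z).1

/-- The statement `Φ^D_z ≠ ∅` (computed along the recursion for `ŝ_D`). -/
def PhiNEs {k r : ℕ} (Θ : Set ((Fin k → ℕ) × (Fin k → ℕ)))
    (D : Set (Fin k → ℕ)) (F : (Fin k → ℕ) → (Fin r → (Fin k → ℕ) × ℕ) → Option ℕ)
    (z : Fin k → ℕ) : Prop :=
  (sAuxN Θ D F (maxv z) z).2

/-- The set `Φ^D_z` for the recursion defining `ŝ_D`. -/
def PhiD {k r : ℕ} (Θ : Set ((Fin k → ℕ) × (Fin k → ℕ)))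
    (D : Set (Fin k → ℕ)) (F : (Fin k → ℕ) → (Fin r → (Fin k → ℕ) × ℕ) → Option ℕ)
    (z : Fin k → ℕ) : Set ℕ :=
  PhiStep Θ D F (fun y => (sD Θ D F y, PhiNEs Θ D F y)) z

/-- Fuel-based recursion computing `(h^ρ_D(z), Φ^D_z ≠ ∅)`: same recursion as for
`ŝ_D` except that the value is `ρ(z)` when `Φ^D_z = ∅`. -/
noncomputable def hAuxN {k r : ℕ} (Θ : Set ((Fin k → ℕ) × (Fin k → ℕ)))
    (D : Set (Fin k → ℕ)) (F : (Fin k → ℕ) → (Fin r → (Fin k → ℕ) × ℕ) → Option ℕ)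
    (ρ : (Fin k → ℕ) → ℕ) : ℕ → (Fin k → ℕ) → ℕ × Prop
  | 0, z =>
      (if (PhiStep Θ D F (fun y => (maxv y, False)) z).Nonempty then
        sInf (PhiStep Θ D F (fun y => (maxv y, False)) z)
      else ρ z,
      (PhiStep Θ D F (fun y => (maxv y, False)) z).Nonempty)
  | (m + 1), z =>
      (if (PhiStep Θ D F (hAuxN Θ D F ρ m) z).Nonempty then
        sInf (PhiStep Θ D F (hAuxN Θ D F ρ m) z)
      else ρ z,
      (PhiStep Θ D F (hAuxN Θ D F ρ m) z).Nonempty)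

/-- `h^ρ_D(z)`: `ρ(z)` if `Φ^D_z = ∅`, else `min(Φ^D_z)`. -/
noncomputable def hRD {k r : ℕ} (Θ : Set ((Fin k → ℕ) × (Fin k → ℕ)))
    (D : Set (Fin k → ℕ)) (F : (Fin k → ℕ) → (Fin r → (Fin k → ℕ) × ℕ) → Option ℕ)
    (ρ : (Fin k → ℕ) → ℕ) (z : Fin k → ℕ) : ℕ :=
  (hAuxN Θ D F ρ (maxv z) z).1

/-- The statement `Φ^D_z ≠ ∅` (computed along the recursion for `h^ρ_D`). -/
def PhiNEh {k r : ℕ} (Θ : Set ((Fin k → ℕ) × (Fin k → ℕ)))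
    (D : Set (Fin k → ℕ)) (F : (Fin k → ℕ) → (Fin r → (Fin k → ℕ) × ℕ) → Option ℕ)
    (ρ : (Fin k → ℕ) → ℕ) (z : Fin k → ℕ) : Prop :=
  (hAuxN Θ D F ρ (maxv z) z).2

/-- The set `Φ^D_z` for the recursion defining `h^ρ_D`. -/
def PhiDh {k r : ℕ} (Θ : Set ((Fin k → ℕ) × (Fin k → ℕ)))
    (D : Set (Fin k → ℕ)) (F : (Fin k → ℕ) → (Fin r → (Fin k → ℕ) × ℕ) → Option ℕ)
    (ρ : (Fin k → ℕ) → ℕ) (z : Fin k → ℕ) : Set ℕ :=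
  PhiStep Θ D F (fun y => (hRD Θ D F ρ y, PhiNEh Θ D F ρ y)) z

/-- The family `S = {ŝ_D : D ⊆ N^k, D finite}`, as functions with finite
domains. -/
def sFam {k r : ℕ} (Θ : Set ((Fin k → ℕ) × (Fin k → ℕ)))
    (F : (Fin k → ℕ) → (Fin r → (Fin k → ℕ) × ℕ) → Option ℕ) : Set (FinFn k) :=
  {f | ∃ D : Finset (Fin k → ℕ), f.dom = D ∧ f.toFun = sD Θ (↑D) F}

/-!
When `Φ^D_z ≠ ∅`, following the selected entries down the graph shows that `ŝ_D(z)` is `min(y)` for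
some `y ∈ D` with `max(y) < max(z)`. Hence `ŝ_D` takes values in the field of `D`, and
`Φ^D_z ≠ ∅` exactly when `ŝ_D(z) < max(z)`. By the latter, the entry that `y` contributes to the
recursion depends on `ŝ_D(y)` alone, so if `ŝ_A` and `ŝ_B` agree on `A_x ⊆ B_x` then
`Φ^A_x ⊆ Φ^B_x`, and passing to minima gives `ŝ_A(x) ≥ ŝ_B(x)`.
-/

section Coordinates

variable {k : ℕ}

theorem minv_mem_range [Nonempty (Fin k)] (z : Fin k → ℕ) : minv z ∈ Set.range z :=
  Nat.sInf_mem (Set.range_nonempty z)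

theorem maxv_mem_range [Nonempty (Fin k)] (z : Fin k → ℕ) : maxv z ∈ Set.range z := by
  obtain ⟨i, -, hi⟩ := Finset.exists_mem_eq_sup _ Finset.univ_nonempty z
  exact ⟨i, hi.symm⟩

theorem minv_le_maxv (z : Fin k → ℕ) : minv z ≤ maxv z := by
  rcases isEmpty_or_nonempty (Fin k) with _ | _
  · simp [minv, Set.range_eq_empty]
  · obtain ⟨i, hi⟩ := minv_mem_range z
    exact hi ▸ Finset.le_sup (Finset.mem_univ i)

end Coordinates

section Recursion

variable {k r : ℕ} {Θ : Set ((Fin k → ℕ) × (Fin k → ℕ))} {D A B : Set (Fin k → ℕ)}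
  {F : (Fin k → ℕ) → (Fin r → (Fin k → ℕ) × ℕ) → Option ℕ} {x y z : Fin k → ℕ} {n : ℕ}

/-- `F` is a partial selection function: its defined values are among the numbers it is given.
Undefined values are encoded as `none`. -/
def IsSelection (F : (Fin k → ℕ) → (Fin r → (Fin k → ℕ) × ℕ) → Option ℕ) : Prop :=
  ∀ z w n, F z w = some n → ∃ i : Fin r, n = (w i).2

/-- The number `n_i` paired with the vertex `y_i = y` in the recursion for `Φ^D_z`, computed from
the pairs `prev y` (value at `y`, `Φ^D_y ≠ ∅`) as in `PhiStep`. -/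
noncomputable def label (prev : (Fin k → ℕ) → ℕ × Prop) (y : Fin k → ℕ) : ℕ :=
  if (prev y).2 then (prev y).1 else minv y

/-- The pair `(ŝ_D(z), Φ^D_z ≠ ∅)` to which the recursion `sAuxN` stabilizes. -/
noncomputable def sState (Θ : Set ((Fin k → ℕ) × (Fin k → ℕ))) (D : Set (Fin k → ℕ))
    (F : (Fin k → ℕ) → (Fin r → (Fin k → ℕ) × ℕ) → Option ℕ) (z : Fin k → ℕ) : ℕ × Prop :=
  (sD Θ D F z, PhiNEs Θ D F z)

theorem label_congr {p q : (Fin k → ℕ) → ℕ × Prop} (h : p y = q y) : label p y = label q y := by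
  rw [label, label, h]

theorem phiStep_subset_phiStep {p q : (Fin k → ℕ) → ℕ × Prop} (hz : z ∈ A → z ∈ B)
    (hAB : ∀ y ∈ A, (z, y) ∈ Θ → y ∈ B) (hpq : ∀ y ∈ A, (z, y) ∈ Θ → label p y = label q y) :
    PhiStep Θ A F p z ⊆ PhiStep Θ B F q z := by
  rintro n ⟨w, hw, hn⟩
  refine ⟨w, fun i => ?_, hn⟩
  obtain ⟨⟨hzA, hyA, hedge⟩, hlabel⟩ := hw i
  exact ⟨⟨hz hzA, hAB _ hyA hedge, hedge⟩, hlabel.trans (hpq _ hyA hedge)⟩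

theorem phiStep_congr (hΘ : Downward Θ) {p q : (Fin k → ℕ) → ℕ × Prop}
    (hpq : ∀ y, maxv y < maxv z → p y = q y) : PhiStep Θ D F p z = PhiStep Θ D F q z := by
  have hlabel : ∀ y, (z, y) ∈ Θ → label p y = label q y := fun y hy =>
    label_congr (hpq y (hΘ _ hy))
  exact (phiStep_subset_phiStep id (fun _ hy _ => hy) fun y _ => hlabel y).antisymm
    (phiStep_subset_phiStep id (fun _ hy _ => hy) fun y _ hy => (hlabel y hy).symm)

theorem sAuxN_succ_of_maxv_le (hΘ : Downward Θ) (hz : maxv z ≤ n) :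
    sAuxN Θ D F (n + 1) z = sAuxN Θ D F n z := by
  induction n generalizing z with
  | zero =>
    have hstep : PhiStep Θ D F (sAuxN Θ D F 0) z = PhiStep Θ D F (fun y => (maxv y, False)) z :=
      phiStep_congr hΘ fun y hy => by omega
    rw [sAuxN, sAuxN, hstep]
  | succ m ih =>
    have hstep : PhiStep Θ D F (sAuxN Θ D F (m + 1)) z = PhiStep Θ D F (sAuxN Θ D F m) z :=
      phiStep_congr hΘ fun y hy => ih (by omega)
    rw [sAuxN, hstep, sAuxN]

theorem sAuxN_eq_sState (hΘ : Downward Θ) (hz : maxv z ≤ n) :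
    sAuxN Θ D F n z = sState Θ D F z := by
  induction n, hz using Nat.le_induction with
  | base => rfl
  | succ n hn ih => rw [sAuxN_succ_of_maxv_le hΘ hn, ih]

theorem sState_eq (hΘ : Downward Θ) (z : Fin k → ℕ) :
    sState Θ D F z =
      (if (PhiD Θ D F z).Nonempty then sInf (PhiD Θ D F z) else maxv z,
        (PhiD Θ D F z).Nonempty) := by
  have hstep : PhiStep Θ D F (sAuxN Θ D F (maxv z)) z = PhiD Θ D F z :=
    phiStep_congr hΘ fun y hy => sAuxN_eq_sState hΘ hy.le
  rw [← sAuxN_eq_sState hΘ (Nat.le_succ (maxv z)), sAuxN, hstep]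

theorem phiNEs_iff (hΘ : Downward Θ) : PhiNEs Θ D F z ↔ (PhiD Θ D F z).Nonempty :=
  (congrArg Prod.snd (sState_eq hΘ z)).to_iff

theorem sD_eq_sInf (hΘ : Downward Θ) (hz : (PhiD Θ D F z).Nonempty) :
    sD Θ D F z = sInf (PhiD Θ D F z) :=
  (congrArg Prod.fst (sState_eq hΘ z)).trans (if_pos hz)

theorem sD_eq_maxv (hΘ : Downward Θ) (hz : ¬(PhiD Θ D F z).Nonempty) :
    sD Θ D F z = maxv z :=
  (congrArg Prod.fst (sState_eq hΘ z)).trans (if_neg hz)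

theorem label_sState_of_nonempty (hΘ : Downward Θ) (hy : (PhiD Θ D F y).Nonempty) :
    label (sState Θ D F) y = sD Θ D F y :=
  if_pos ((phiNEs_iff hΘ).2 hy)

theorem label_sState_of_not_nonempty (hΘ : Downward Θ) (hy : ¬(PhiD Θ D F y).Nonempty) :
    label (sState Θ D F) y = minv y :=
  if_neg (mt (phiNEs_iff hΘ).1 hy)

theorem exists_label_eq_of_mem_phiD (hΘ : Downward Θ) (hF : IsSelection F)
    (hn : n ∈ PhiD Θ D F z) :
    ∃ y ∈ D, maxv y < maxv z ∧ n = label (sState Θ D F) y := by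
  obtain ⟨w, hw, hFn⟩ := hn
  obtain ⟨i, hi⟩ := hF _ _ _ hFn
  obtain ⟨⟨-, hyD, hedge⟩, hlabel⟩ := hw i
  exact ⟨(w i).1, hyD, hΘ _ hedge, hi.trans hlabel⟩

theorem exists_sD_eq_minv (hΘ : Downward Θ) (hF : IsSelection F)
    (hz : (PhiD Θ D F z).Nonempty) :
    ∃ y ∈ D, maxv y < maxv z ∧ sD Θ D F z = minv y := by
  induction hm : maxv z using Nat.strong_induction_on generalizing z with
  | _ m ih =>
    subst hm
    obtain ⟨y, hyD, hyz, hlabel⟩ := exists_label_eq_of_mem_phiD hΘ hF (Nat.sInf_mem hz)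
    rw [← sD_eq_sInf hΘ hz] at hlabel
    by_cases hy : (PhiD Θ D F y).Nonempty
    · obtain ⟨u, huD, huy, hu⟩ := ih _ hyz hy rfl
      exact ⟨u, huD, huy.trans hyz, by rw [hlabel, label_sState_of_nonempty hΘ hy, hu]⟩
    · exact ⟨y, hyD, hyz, by rw [hlabel, label_sState_of_not_nonempty hΘ hy]⟩

theorem sD_lt_maxv_iff (hΘ : Downward Θ) (hF : IsSelection F) :
    sD Θ D F z < maxv z ↔ (PhiD Θ D F z).Nonempty := by
  refine ⟨fun hlt => ?_, fun hz => ?_⟩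
  · by_contra hz
    exact hlt.ne (sD_eq_maxv hΘ hz)
  · obtain ⟨y, -, hyz, hy⟩ := exists_sD_eq_minv hΘ hF hz
    exact hy ▸ (minv_le_maxv y).trans_lt hyz

theorem sD_le_maxv (hΘ : Downward Θ) (hF : IsSelection F) : sD Θ D F z ≤ maxv z := by
  by_cases hz : (PhiD Θ D F z).Nonempty
  · exact ((sD_lt_maxv_iff hΘ hF).2 hz).le
  · exact (sD_eq_maxv hΘ hz).le

theorem sState_congr (hΘ : Downward Θ) (hF : IsSelection F) (h : sD Θ A F y = sD Θ B F y) :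
    sState Θ A F y = sState Θ B F y := by
  have hne : PhiNEs Θ A F y ↔ PhiNEs Θ B F y := by
    rw [phiNEs_iff hΘ, phiNEs_iff hΘ, ← sD_lt_maxv_iff hΘ hF, ← sD_lt_maxv_iff hΘ hF, h]
  exact Prod.ext h (propext hne)

theorem phiD_subset_phiD (hΘ : Downward Θ) (hF : IsSelection F) (hxB : x ∈ B)
    (hAB : ∀ y ∈ A, maxv y < maxv x → y ∈ B)
    (heq : ∀ y ∈ A, maxv y < maxv x → sD Θ A F y = sD Θ B F y) :
    PhiD Θ A F x ⊆ PhiD Θ B F x :=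
  phiStep_subset_phiStep (fun _ => hxB) (fun y hy hedge => hAB y hy (hΘ _ hedge))
    fun y hy hedge => label_congr (sState_congr hΘ hF (heq y hy (hΘ _ hedge)))

theorem sD_le_sD (hΘ : Downward Θ) (hF : IsSelection F) (hxB : x ∈ B)
    (hAB : ∀ y ∈ A, maxv y < maxv x → y ∈ B)
    (heq : ∀ y ∈ A, maxv y < maxv x → sD Θ A F y = sD Θ B F y) :
    sD Θ B F x ≤ sD Θ A F x := by
  by_cases hxA : (PhiD Θ A F x).Nonempty
  · have hsub := phiD_subset_phiD hΘ hF hxB hAB heq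
    rw [sD_eq_sInf hΘ hxA, sD_eq_sInf hΘ (hxA.mono hsub)]
    exact Nat.sInf_le (hsub (Nat.sInf_mem hxA))
  · exact (sD_le_maxv hΘ hF).trans_eq (sD_eq_maxv hΘ hxA).symm

theorem sD_mem_fieldSet [Nonempty (Fin k)] (hΘ : Downward Θ) (hF : IsSelection F)
    {D : Finset (Fin k → ℕ)} (hz : z ∈ D) : sD Θ D F z ∈ fieldSet D := by
  by_cases hne : (PhiD Θ D F z).Nonempty
  · obtain ⟨y, hyD, -, hy⟩ := exists_sD_eq_minv hΘ hF hne
    exact ⟨y, hyD, hy ▸ minv_mem_range y⟩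
  · exact ⟨z, hz, sD_eq_maxv hΘ hne ▸ maxv_mem_range z⟩

theorem sFam_eq_range :
    sFam Θ F = Set.range fun D : Finset (Fin k → ℕ) => (⟨D, sD Θ D F⟩ : FinFn k) := by
  ext ⟨A, f⟩
  simp only [sFam, Set.mem_ofPred_eq, Set.mem_range, FinFn.mk.injEq, eq_comm]

theorem fullFam_sFam : FullFam (sFam Θ F) :=
  fun D => ⟨⟨D, sD Θ D F⟩, ⟨D, rfl, rfl⟩, rfl⟩

theorem reflexiveFam_sFam [Nonempty (Fin k)] (hΘ : Downward Θ) (hF : IsSelection F) :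
    ReflexiveFam (sFam Θ F) := by
  rw [sFam_eq_range]
  rintro _ ⟨D, rfl⟩ x hx
  exact sD_mem_fieldSet hΘ hF hx

theorem jumpFreeFam_sFam (hΘ : Downward Θ) (hF : IsSelection F) : JumpFreeFam (sFam Θ F) := by
  rw [sFam_eq_range]
  rintro _ ⟨A, rfl⟩ _ ⟨B, rfl⟩ x - hxB hAB heq
  exact sD_le_sD hΘ hF hxB hAB heq

end Recursion

/-- for `k ≥ 2`, `r ≥ 1`, a downward directed graph
`G = (N^k, Θ)` and a partial selection function `F`, the family
`S = {ŝ_D : D ⊆ N^k, D finite}` is full, reflexive and jump free. -/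
theorem stmt4 (k r : ℕ) (hk : 2 ≤ k) (hr : 1 ≤ r)
    (Θ : Set ((Fin k → ℕ) × (Fin k → ℕ))) (hΘ : Downward Θ)
    (F : (Fin k → ℕ) → (Fin r → (Fin k → ℕ) × ℕ) → Option ℕ)
    (hF : ∀ z w n, F z w = some n → ∃ i : Fin r, n = (w i).2) :
    FullFam (sFam Θ F) ∧ ReflexiveFam (sFam Θ F) ∧ JumpFreeFam (sFam Θ F) := by
  have : Nonempty (Fin k) := ⟨⟨0, by omega⟩⟩
  exact ⟨fullFam_sFam, reflexiveFam_sFam hΘ hF, jumpFreeFam_sFam hΘ hF⟩
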